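/- For q ≥ p ≥ 1 with q ≥ 2, the local antimagic chromatic number of K_{p,q} equals q+1 if q > p = 1; equals 2 if q > p ≥ 2 and p ≡ q (mod 2); and equals 3 otherwise. -/

import Mathlib

open scoped BigOperators

/-- The induced vertex sum: sum of labels of edges incident to `v`. -/
noncomputable def vertexSum {V : Type*} (G : SimpleGraph V) (f : Sym2 V → ℕ) (v : V) : ℕ :=
  ∑ᶠ e ∈ G.incidenceSet v, f e

/-- `f` is a local antimagic labeling of `G`: a bijection from the edge set onto
`{1, …, |E(G)|}` such that adjacent vertices get distinct induced sums. -/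
def IsLocalAntimagic {V : Type*} (G : SimpleGraph V) (f : Sym2 V → ℕ) : Prop :=
  Set.BijOn f G.edgeSet (Set.Icc 1 G.edgeSet.ncard) ∧
  ∀ u v, G.Adj u v → vertexSum G f u ≠ vertexSum G f v

/-- Number of distinct induced vertex labels of the labeling `f`. -/
noncomputable def colorCount {V : Type*} (G : SimpleGraph V) (f : Sym2 V → ℕ) : ℕ :=
  (Set.range (vertexSum G f)).ncard

/-- The local antimagic chromatic number. -/
noncomputable def chiLA {V : Type*} (G : SimpleGraph V) : ℕ :=
  sInf { n | ∃ f, IsLocalAntimagic G f ∧ colorCount G f = n }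

/-- The join `G ∨ Oₙ` of `G` with the empty graph on `n` vertices. -/
def joinEmpty {V : Type*} (G : SimpleGraph V) (n : ℕ) : SimpleGraph (V ⊕ Fin n) :=
  SimpleGraph.fromRel (fun x y =>
    (∃ a b, x = Sum.inl a ∧ y = Sum.inl b ∧ G.Adj a b) ∨ (x.isLeft ∧ y.isRight))

/-!
A labeling of `K_{p,q}` is a bijective `p × q` array with entries `1, …, p q`, and its vertex sums
are the row and column sums of the array. Two values are possible only if all rows have one sum and
all columns another; as both must average correctly, this forces `p ≠ q` and `p ≡ q (mod 2)`. If
`p = 1`, all column sums are distinct and smaller than the row sum.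

For the upper bounds the entries are centred at `0`, and the task becomes to give all columns the
sum `0` and all rows a sum `± ρ`, with `ρ = 0` where two values suffice. If `p` is even, one signs
the odd numbers below `p q` in a `(p / 2) × q` array and stacks the result on its negative. If
`p = 2 h + 1` and `q = 2 k + 1` are odd with `p < q`, the centred entries are `2 (x + p y)` with
`|x| ≤ h` and `|y| ≤ k`, and the rows are assembled from strips with `x ∈ {v, 0, -v}` or `x = ± v`;
in the latter the entries of `(q - p) / 2` columns, chosen through a subset-sum argument, are
exchanged. For odd `p = q` one row of a semimagic square is rotated.
-/

section Arrays

variable {ι κ R T : Type*}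

/-- The array `A` has pairwise distinct entries, all of them in `S`. All our arrays have as many
cells as `S` has elements, so that every element of `S` occurs exactly once. -/
structure IsFilling (S : Set R) (A : ι → κ → R) : Prop where
  injective : Function.Injective2 A
  mem : ∀ i j, A i j ∈ S

namespace IsFilling

variable {S S' : Set R} {A : ι → κ → R}

lemma mono (h : IsFilling S A) (hS : S ⊆ S') : IsFilling S' A :=
  ⟨h.injective, fun i j => hS (h.mem i j)⟩

lemma transpose (h : IsFilling S A) : IsFilling S fun j i => A i j :=
  ⟨fun _ _ _ _ e => (h.injective e).symm, fun j i => h.mem i j⟩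

lemma map (h : IsFilling S A) {f : R → T} {S' : Set T} (hf : Set.InjOn f S)
    (hS : Set.MapsTo f S S') : IsFilling S' fun i j => f (A i j) :=
  ⟨fun _ _ _ _ e => h.injective (hf (h.mem _ _) (h.mem _ _) e), fun i j => hS (h.mem i j)⟩

lemma permRows (h : IsFilling S A) (σ : ι → Equiv.Perm κ) :
    IsFilling S fun i j => A i (σ i j) := by
  refine ⟨fun i i' j j' e => ?_, fun i j => h.mem i _⟩
  obtain ⟨rfl, hj⟩ := h.injective e
  exact ⟨rfl, (σ i).injective hj⟩

lemma permCols (h : IsFilling S A) (σ : κ → Equiv.Perm ι) :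
    IsFilling S fun i j => A (σ j i) j :=
  (h.transpose.permRows σ).transpose

lemma append {m n : ℕ} {A : Fin m → κ → R} {B : Fin n → κ → R} (hA : IsFilling S A)
    (hB : IsFilling S' B) (hS : Disjoint S S') : IsFilling (S ∪ S') (Fin.append A B) := by
  have hne (i : Fin m) (j : κ) (i' : Fin n) (j' : κ) : A i j ≠ B i' j' :=
    hS.ne_of_mem (hA.mem i j) (hB.mem i' j')
  constructor
  · intro i i' j j' e
    induction i using Fin.addCases <;> induction i' using Fin.addCases <;>
      simp only [Fin.append_left, Fin.append_right] at e
    · exact (hA.injective e).imp_left (congrArg _)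
    · exact absurd e (hne _ _ _ _)
    · exact absurd e.symm (hne _ _ _ _)
    · exact (hB.injective e).imp_left (congrArg _)
  · intro i j
    induction i using Fin.addCases with
    | left i => exact Or.inl (by simpa only [Fin.append_left] using hA.mem i j)
    | right i => exact Or.inr (by simpa only [Fin.append_right] using hB.mem i j)

variable [Fintype ι] [Fintype κ] {S : Finset R}

lemma image_univ_eq [DecidableEq R] (h : IsFilling (S : Set R) A)
    (hcard : S.card ≤ Fintype.card ι * Fintype.card κ) :
    Finset.univ.image (Function.uncurry A) = S := by
  apply Finset.eq_of_subset_of_card_le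
  · rintro _ hx
    obtain ⟨⟨i, j⟩, -, rfl⟩ := Finset.mem_image.1 hx
    exact h.mem i j
  · rwa [Finset.card_image_of_injective _ h.injective.uncurry, Finset.card_univ,
      Fintype.card_prod]

lemma sum_eq [AddCommMonoid R] (h : IsFilling (S : Set R) A)
    (hcard : S.card ≤ Fintype.card ι * Fintype.card κ) :
    ∑ i, ∑ j, A i j = ∑ x ∈ S, x := by
  classical
  rw [← h.image_univ_eq hcard, Finset.sum_image h.injective.uncurry.injOn,
    ← Finset.univ_product_univ, Finset.sum_product]
  rfl

end IsFilling

end Arrays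

section LocalAntimagic

variable {U : Type*} {G : SimpleGraph U} {f : Sym2 U → ℕ} {u v w : U}

lemma chiLA_eq_of_forall_le {n : ℕ} (hf : IsLocalAntimagic G f) (hn : colorCount G f ≤ n)
    (hle : ∀ g, IsLocalAntimagic G g → n ≤ colorCount G g) : chiLA G = n := by
  have hmem : colorCount G f ∈ {n | ∃ g, IsLocalAntimagic G g ∧ colorCount G g = n} := ⟨f, hf, rfl⟩
  refine le_antisymm ((Nat.sInf_le hmem).trans hn) (le_csInf ⟨_, hmem⟩ ?_)
  rintro _ ⟨g, hg, rfl⟩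
  exact hle g hg

variable [Finite U]

lemma IsLocalAntimagic.two_le_colorCount (hf : IsLocalAntimagic G f) (huv : G.Adj u v) :
    2 ≤ colorCount G f :=
  (Set.one_lt_ncard).2 ⟨_, ⟨u, rfl⟩, _, ⟨v, rfl⟩, hf.2 u v huv⟩

lemma IsLocalAntimagic.vertexSum_eq_of_adj (hf : IsLocalAntimagic G f) (hc : colorCount G f ≤ 2)
    (huv : G.Adj u v) (huw : G.Adj u w) : vertexSum G f v = vertexSum G f w := by
  by_contra hvw
  exact hc.not_gt <| (Set.two_lt_ncard_iff).2
    ⟨_, _, _, ⟨u, rfl⟩, ⟨v, rfl⟩, ⟨w, rfl⟩, hf.2 u v huv, hf.2 u w huw, hvw⟩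

end LocalAntimagic

section CompleteBipartite

open SimpleGraph

variable {V W : Type*} {f : Sym2 (V ⊕ W) → ℕ}

lemma vertexSum_completeBipartiteGraph_inl [Fintype W] (f : Sym2 (V ⊕ W) → ℕ) (v : V) :
    vertexSum (completeBipartiteGraph V W) f (.inl v) = ∑ w, f s(.inl v, .inr w) := by
  have hrange : (completeBipartiteGraph V W).incidenceSet (.inl v) =
      Set.range fun w => s(.inl v, .inr w) := by
    rw [incidenceSet, edgeSet_completeBipartiteGraph]
    ext e
    constructor
    · rintro ⟨⟨⟨v', w'⟩, rfl⟩, h⟩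
      simp_all
    · rintro ⟨x, rfl⟩
      exact ⟨⟨(v, x), rfl⟩, by simp⟩
  rw [vertexSum, hrange, finsum_mem_range fun w w' h => by simpa using h,
    finsum_eq_sum_of_fintype]

lemma vertexSum_completeBipartiteGraph_inr [Fintype V] (f : Sym2 (V ⊕ W) → ℕ) (w : W) :
    vertexSum (completeBipartiteGraph V W) f (.inr w) = ∑ v, f s(.inl v, .inr w) := by
  have hrange : (completeBipartiteGraph V W).incidenceSet (.inr w) =
      Set.range fun v => s(.inl v, .inr w) := by
    rw [incidenceSet, edgeSet_completeBipartiteGraph]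
    ext e
    constructor
    · rintro ⟨⟨⟨v', w'⟩, rfl⟩, h⟩
      simp_all
    · rintro ⟨x, rfl⟩
      exact ⟨⟨(x, w), rfl⟩, by simp⟩
  rw [vertexSum, hrange, finsum_mem_range fun v v' h => by simpa using h,
    finsum_eq_sum_of_fintype]

variable [Fintype V] [Fintype W]

lemma ncard_edgeSet_completeBipartiteGraph :
    (completeBipartiteGraph V W).edgeSet.ncard = Fintype.card V * Fintype.card W := by
  simp [Set.ncard, encard_edgeSet_completeBipartiteGraph]

lemma IsLocalAntimagic.isFilling (hf : IsLocalAntimagic (completeBipartiteGraph V W) f) :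
    IsFilling (Finset.Icc 1 (Fintype.card V * Fintype.card W) : Set ℕ)
      fun v w => f s(.inl v, .inr w) := by
  have hmem (v : V) (w : W) : s(.inl v, .inr w) ∈ (completeBipartiteGraph V W).edgeSet := by simp
  constructor
  · intro v v' w w' e
    simpa using hf.1.injOn (hmem v w) (hmem v' w') e
  · intro v w
    simpa [ncard_edgeSet_completeBipartiteGraph] using hf.1.mapsTo (hmem v w)

lemma isLocalAntimagic_completeBipartiteGraph
    (h : IsFilling (Finset.Icc 1 (Fintype.card V * Fintype.card W) : Set ℕ)
      fun v w => f s(.inl v, .inr w))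
    (hne : ∀ v w, ∑ w', f s(.inl v, .inr w') ≠ ∑ v', f s(.inl v', .inr w)) :
    IsLocalAntimagic (completeBipartiteGraph V W) f := by
  have himage := h.image_univ_eq (by simp)
  constructor
  · rw [ncard_edgeSet_completeBipartiteGraph, ← Finset.coe_Icc, ← himage,
      edgeSet_completeBipartiteGraph, Finset.coe_image, Finset.coe_univ, Set.image_univ]
    refine ⟨?_, ?_, ?_⟩
    · rintro _ ⟨x, rfl⟩
      exact ⟨x, rfl⟩
    · rintro _ ⟨x, rfl⟩ _ ⟨y, rfl⟩ e
      rw [Prod.ext_iff.2 (h.injective e)]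
    · rintro _ ⟨x, rfl⟩
      exact ⟨_, ⟨x, rfl⟩, rfl⟩
  · rintro (v | w) (v' | w') hadj <;> simp only [completeBipartiteGraph_adj, Sum.isLeft_inl,
      Sum.isRight_inl, Sum.isLeft_inr, Sum.isRight_inr] at hadj
    · simp at hadj
    · simpa only [vertexSum_completeBipartiteGraph_inl, vertexSum_completeBipartiteGraph_inr]
        using hne v w'
    · simpa only [vertexSum_completeBipartiteGraph_inl, vertexSum_completeBipartiteGraph_inr]
        using (hne v' w).symm
    · simp at hadj

lemma IsLocalAntimagic.two_mul_sum_label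
    (hf : IsLocalAntimagic (completeBipartiteGraph V W) f) :
    2 * ∑ v, ∑ w, f s(.inl v, .inr w) =
      Fintype.card V * Fintype.card W * (Fintype.card V * Fintype.card W + 1) := by
  rw [hf.isFilling.sum_eq (by simp)]
  set N := Fintype.card V * Fintype.card W
  have hgauss := Finset.sum_range_id_mul_two (N + 1)
  rw [Finset.range_eq_Ico, Finset.sum_eq_sum_Ico_succ_bot (Nat.add_one_pos N), zero_add, zero_add,
    Finset.Ico_add_one_right_eq_Icc, Nat.add_sub_cancel] at hgauss
  linear_combination hgauss

lemma IsLocalAntimagic.two_mul_vertexSum_inl [Nonempty W]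
    (hf : IsLocalAntimagic (completeBipartiteGraph V W) f)
    (hc : colorCount (completeBipartiteGraph V W) f ≤ 2) (v : V) :
    2 * vertexSum (completeBipartiteGraph V W) f (.inl v) =
      Fintype.card W * (Fintype.card V * Fintype.card W + 1) := by
  obtain ⟨w⟩ := ‹Nonempty W›
  have hV : 0 < Fintype.card V := Fintype.card_pos_iff.2 ⟨v⟩
  have hconst (v' : V) : ∑ w', f s(.inl v', .inr w') =
      vertexSum (completeBipartiteGraph V W) f (.inl v) := by
    rw [← vertexSum_completeBipartiteGraph_inl]
    exact hf.vertexSum_eq_of_adj hc (u := .inr w) (by simp) (by simp)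
  have htotal := hf.two_mul_sum_label
  simp only [hconst, Finset.sum_const, Finset.card_univ, smul_eq_mul] at htotal
  apply Nat.eq_of_mul_eq_mul_left hV
  linear_combination htotal

lemma IsLocalAntimagic.two_mul_vertexSum_inr [Nonempty V]
    (hf : IsLocalAntimagic (completeBipartiteGraph V W) f)
    (hc : colorCount (completeBipartiteGraph V W) f ≤ 2) (w : W) :
    2 * vertexSum (completeBipartiteGraph V W) f (.inr w) =
      Fintype.card V * (Fintype.card V * Fintype.card W + 1) := by
  obtain ⟨v⟩ := ‹Nonempty V›
  have hW : 0 < Fintype.card W := Fintype.card_pos_iff.2 ⟨w⟩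
  have hconst (w' : W) : ∑ v', f s(.inl v', .inr w') =
      vertexSum (completeBipartiteGraph V W) f (.inr w) := by
    rw [← vertexSum_completeBipartiteGraph_inr]
    exact hf.vertexSum_eq_of_adj hc (u := .inl v) (by simp) (by simp)
  have htotal := hf.two_mul_sum_label
  rw [Finset.sum_comm] at htotal
  simp only [hconst, Finset.sum_const, Finset.card_univ, smul_eq_mul] at htotal
  apply Nat.eq_of_mul_eq_mul_left hW
  linear_combination htotal

-- With two colours, every sum on one side is `|W| (|V| |W| + 1) / 2` and every sum on the other
-- side is `|V| (|V| |W| + 1) / 2`, and these would have to be distinct integers.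
lemma IsLocalAntimagic.three_le_colorCount [Nonempty V] [Nonempty W]
    (hf : IsLocalAntimagic (completeBipartiteGraph V W) f)
    (h : Fintype.card V = Fintype.card W ∨ Fintype.card V % 2 ≠ Fintype.card W % 2) :
    3 ≤ colorCount (completeBipartiteGraph V W) f := by
  by_contra! hc
  obtain ⟨v⟩ := ‹Nonempty V›
  obtain ⟨w⟩ := ‹Nonempty W›
  have hv := hf.two_mul_vertexSum_inl (Nat.le_of_lt_succ hc) v
  have hw := hf.two_mul_vertexSum_inr (Nat.le_of_lt_succ hc) w
  rcases h with h | h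
  · refine hf.2 (.inl v) (.inr w) (by simp) (Nat.eq_of_mul_eq_mul_left two_pos ?_)
    rw [hv, hw, h]
  · have hWeven : Even (Fintype.card W * (Fintype.card V * Fintype.card W + 1)) :=
      hv ▸ even_two_mul _
    have hVeven : Even (Fintype.card V * (Fintype.card V * Fintype.card W + 1)) :=
      hw ▸ even_two_mul _
    simp only [Nat.even_mul, Nat.even_add_one] at hWeven hVeven
    grind

end CompleteBipartite

lemma IsLocalAntimagic.colorCount_eq_card_add_one {V W : Type*} [Unique V] [Fintype W]
    {f : Sym2 (V ⊕ W) → ℕ}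
    (hf : IsLocalAntimagic (completeBipartiteGraph V W) f) :
    colorCount (completeBipartiteGraph V W) f = Fintype.card W + 1 := by
  have hinj : Function.Injective (vertexSum (completeBipartiteGraph V W) f) := by
    rintro (v | w) (v' | w') e
    · rw [Subsingleton.elim v v']
    · exact absurd e (hf.2 _ _ (by simp))
    · exact absurd e (hf.2 _ _ (by simp))
    · simp only [vertexSum_completeBipartiteGraph_inr, Fintype.sum_unique] at e
      rw [(hf.isFilling.injective e).2]
  rw [colorCount, Set.ncard, ← Set.image_univ, hinj.encard_image]
  simp [add_comm]

/-- There is a bijective arrangement of `1, …, p q` in a `p × q` array whose row sums differ from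
its column sums, and whose row and column sums take at most `c` values altogether. -/
def HasAntimagicArray (p q c : ℕ) : Prop :=
  ∃ L : Fin p → Fin q → ℕ, IsFilling (Set.Icc 1 (p * q)) L ∧
    (∀ i j, ∑ j', L i j' ≠ ∑ i', L i' j) ∧
    ∃ T : Finset ℕ, T.card ≤ c ∧ (∀ i, ∑ j, L i j ∈ T) ∧ ∀ j, ∑ i, L i j ∈ T

namespace HasAntimagicArray

variable {p q c : ℕ}

lemma symm (h : HasAntimagicArray p q c) : HasAntimagicArray q p c := by
  obtain ⟨L, hL, hne, T, hT, hrow, hcol⟩ := h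
  exact ⟨fun j i => L i j, mul_comm p q ▸ hL.transpose, fun j i => (hne i j).symm,
    T, hT, hcol, hrow⟩

lemma exists_isLocalAntimagic (h : HasAntimagicArray p q c) :
    ∃ f, IsLocalAntimagic (completeBipartiteGraph (Fin p) (Fin q)) f ∧
      colorCount (completeBipartiteGraph (Fin p) (Fin q)) f ≤ c := by
  obtain ⟨L, hL, hne, T, hT, hrow, hcol⟩ := h
  let label : Fin p ⊕ Fin q → Fin p ⊕ Fin q → ℕ
    | .inl i, .inr j | .inr j, .inl i => L i j
    | _, _ => 0
  have hsymm (x y) : label x y = label y x := by rcases x with _ | _ <;> rcases y with _ | _ <;> rfl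
  let f : Sym2 (Fin p ⊕ Fin q) → ℕ := Sym2.lift ⟨label, hsymm⟩
  refine ⟨f, isLocalAntimagic_completeBipartiteGraph (by simpa [f, label] using hL) hne, ?_⟩
  have hrange : Set.range (vertexSum (completeBipartiteGraph (Fin p) (Fin q)) f) ⊆ T := by
    rintro _ ⟨i | j, rfl⟩
    · rw [vertexSum_completeBipartiteGraph_inl]
      exact hrow i
    · rw [vertexSum_completeBipartiteGraph_inr]
      exact hcol j
  calc colorCount _ f ≤ (T : Set ℕ).ncard := Set.ncard_le_ncard hrange
    _ = T.card := Set.ncard_coe_finset T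
    _ ≤ c := hT

end HasAntimagicArray

lemma hasAntimagicArray_one {q : ℕ} (hq : 2 ≤ q) : HasAntimagicArray 1 q (q + 1) := by
  refine ⟨fun _ j => j + 1, ⟨fun i i' j j' e => ⟨Subsingleton.elim i i', ?_⟩, fun _ j => ?_⟩,
    fun _ j => ?_, insert (∑ j : Fin q, (j + 1 : ℕ)) (Finset.Icc 1 q), ?_, fun _ => ?_, fun j => ?_⟩
  · exact Fin.ext (Nat.succ_injective e)
  · exact ⟨by omega, by omega⟩
  · have : Nontrivial (Fin q) := Fin.nontrivial_iff_two_le.2 hq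
    obtain ⟨j', hj'⟩ := exists_ne j
    rw [Fin.sum_univ_one]
    exact (Finset.single_lt_sum hj' (Finset.mem_univ j) (Finset.mem_univ j') (Nat.succ_pos _)
      fun _ _ _ => Nat.zero_le _).ne'
  · simpa using Finset.card_insert_le (∑ j : Fin q, (j + 1 : ℕ)) (Finset.Icc 1 q)
  · exact Finset.mem_insert_self _ _
  · rw [Fin.sum_univ_one]
    exact Finset.mem_insert_of_mem (Finset.mem_Icc.2 ⟨Nat.succ_pos _, j.isLt⟩)

/-- The arithmetic progression `1 - m, 3 - m, …, m - 1` of `m` integers, symmetric about `0`. -/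
def centredProgression (m : ℕ) : Set ℤ := {x | x.natAbs < m ∧ (x + m) % 2 = 1}

/-- There is a bijective arrangement of `1 - p q, 3 - p q, …, p q - 1` in a `p × q` array whose
row sums are `ρ` or `-ρ` and whose column sums vanish. The entry `x` stands for the label
`(x + p q + 1) / 2`, so that all bookkeeping takes place in sums centred at `0`. -/
def HasCentredArray (p q : ℕ) (ρ : ℤ) : Prop :=
  ∃ A : Fin p → Fin q → ℤ, IsFilling (centredProgression (p * q)) A ∧
    (∀ i, ∑ j, A i j = ρ ∨ ∑ j, A i j = -ρ) ∧ ∀ j, ∑ i, A i j = 0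

namespace HasCentredArray

variable {p q c : ℕ} {ρ : ℤ}

lemma hasAntimagicArray (h : HasCentredArray p q ρ) (hρ : ρ ≠ (p - q) * (p * q + 1))
    (hρ' : -ρ ≠ (p - q) * (p * q + 1))
    (hc : ({ρ, -ρ, ((p : ℤ) - q) * (p * q + 1)} : Finset ℤ).card ≤ c) :
    HasAntimagicArray p q c := by
  obtain ⟨A, ⟨hinj, hmem⟩, hrow, hcol⟩ := h
  let L : Fin p → Fin q → ℕ := fun i j => ((A i j + (p * q : ℕ) + 1) / 2).toNat
  have hL (i j) : 2 * (L i j : ℤ) = A i j + (p * q + 1) ∧ L i j ∈ Set.Icc 1 (p * q) := by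
    obtain ⟨hlt, hodd⟩ := hmem i j
    simp only [L, Set.mem_Icc]
    rw [← Nat.cast_mul]
    omega
  have hrowL (i) : 2 * ((∑ j, L i j : ℕ) : ℤ) = ∑ j, A i j + q * (p * q + 1) := by
    push_cast
    simp only [Finset.mul_sum, (hL i _).1, Finset.sum_add_distrib (g := fun _ => _ + _),
      Fin.sum_const, nsmul_eq_mul]
  have hcolL (j) : 2 * ((∑ i, L i j : ℕ) : ℤ) = p * (p * q + 1) := by
    push_cast
    simp only [Finset.mul_sum, (hL _ j).1, Finset.sum_add_distrib (g := fun _ => _ + _),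
      hcol, Fin.sum_const, nsmul_eq_mul, zero_add]
  refine ⟨L, ⟨fun i i' j j' e => hinj ?_, fun i j => (hL i j).2⟩, fun i j e => ?_,
    Finset.image (fun x : ℤ => ((x + q * (p * q + 1)) / 2).toNat)
      {ρ, -ρ, ((p : ℤ) - q) * (p * q + 1)},
    Finset.card_image_le.trans hc, fun i => ?_, fun j => ?_⟩
  · linarith [(hL i j).1, (hL i' j').1, congrArg ((↑) : ℕ → ℤ) e]
  · have hsum := hrowL i
    rw [e, hcolL] at hsum
    rcases hrow i with h | h
    · exact hρ (by linear_combination -h - hsum)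
    · exact hρ' (by linear_combination -h - hsum)
  · refine Finset.mem_image.2 ⟨∑ j, A i j, ?_, by rw [← hrowL]; omega⟩
    rcases hrow i with h | h <;> simp [h]
  · refine Finset.mem_image.2 ⟨((p : ℤ) - q) * (p * q + 1), by simp, ?_⟩
    rw [← add_mul, sub_add_cancel, ← hcolL j]
    omega

lemma hasAntimagicArray_three (h : HasCentredArray p q ρ) (hρ : ρ ≠ (p - q) * (p * q + 1))
    (hρ' : -ρ ≠ (p - q) * (p * q + 1)) : HasAntimagicArray p q 3 :=
  h.hasAntimagicArray hρ hρ' Finset.card_le_three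

lemma hasAntimagicArray_two (h : HasCentredArray p q 0) (hpq : p ≠ q) :
    HasAntimagicArray p q 2 := by
  have hne : 0 ≠ ((p : ℤ) - q) * (p * q + 1) :=
    (mul_ne_zero (sub_ne_zero.2 (mod_cast hpq)) (by positivity)).symm
  refine h.hasAntimagicArray hne (by simpa only [neg_zero] using hne) ?_
  simpa only [neg_zero, Finset.insert_eq_of_mem, Finset.mem_insert_self] using Finset.card_le_two

lemma transpose (h : HasCentredArray p q 0) : HasCentredArray q p 0 := by
  obtain ⟨A, hA, hrow, hcol⟩ := h
  exact ⟨fun j i => A i j, mul_comm p q ▸ hA.transpose, fun j => Or.inl (hcol j),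
    fun i => by simpa using hrow i⟩

end HasCentredArray

/-- The odd numbers `1, 3, …, 2 g n - 1` can be arranged in a `g × n` array and given signs such
that every row sums to `ρ`. Together with its negative such an array is one half of a centred
array with `2 g` rows. -/
def HasSignedArray (g n : ℕ) (ρ : ℤ) : Prop :=
  ∃ s : Fin g → Fin n → ℤ,
    IsFilling {x : ℕ | x % 2 = 1 ∧ x < 2 * (g * n)} (fun i j => (s i j).natAbs) ∧
    ∀ i, ∑ j, s i j = ρ

namespace HasSignedArray

variable {g n : ℕ} {ρ : ℤ}

lemma hasCentredArray (h : HasSignedArray g n ρ) : HasCentredArray (g + g) n ρ := by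
  obtain ⟨s, ⟨hinj, hmem⟩, hrow⟩ := h
  have hs : IsFilling {x | ∃ i j, s i j = x} s :=
    ⟨fun _ _ _ _ e => hinj (congrArg _ e), fun i j => ⟨i, j, rfl⟩⟩
  have hneg : IsFilling {x | ∃ i j, -s i j = x} (fun i j => -s i j) :=
    ⟨fun _ _ _ _ e => hs.injective (neg_injective e), fun i j => ⟨i, j, rfl⟩⟩
  have hdisj : Disjoint {x | ∃ i j, s i j = x} {x | ∃ i j, -s i j = x} := by
    refine Set.disjoint_left.2 ?_
    rintro _ ⟨i, j, rfl⟩ ⟨i', j', e⟩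
    obtain ⟨rfl, rfl⟩ := hinj (a₁ := i) (b₁ := j) (a₂ := i') (b₂ := j') (by simp only; omega)
    have := (hmem i j).1
    omega
  refine ⟨_, (hs.append hneg hdisj).mono ?_, fun i => ?_, fun j => ?_⟩
  · rintro x hx
    obtain ⟨i, j, hx⟩ : ∃ i j, (s i j).natAbs = x.natAbs := by
      rcases hx with ⟨i, j, rfl⟩ | ⟨i, j, rfl⟩
      exacts [⟨i, j, rfl⟩, ⟨i, j, (Int.natAbs_neg _).symm⟩]
    obtain ⟨hodd, hlt⟩ := hmem i j
    rw [centredProgression, Set.mem_ofPred_eq, add_mul]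
    omega
  · induction i using Fin.addCases with
    | left i => exact Or.inl (by simpa only [Fin.append_left] using hrow i)
    | right i =>
      exact Or.inr (by simpa only [Fin.append_right, Finset.sum_neg_distrib, neg_inj] using hrow i)
  · simp only [Fin.sum_univ_add, Fin.append_left, Fin.append_right, Finset.sum_neg_distrib,
      add_neg_cancel]

lemma neg (h : HasSignedArray g n ρ) : HasSignedArray g n (-ρ) := by
  obtain ⟨s, hs, hrow⟩ := h
  exact ⟨fun i j => -s i j, by simpa only [Int.natAbs_neg] using hs,
    fun i => by rw [Finset.sum_neg_distrib, hrow]⟩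

lemma append_rows {g' : ℕ} (h : HasSignedArray g n ρ) {t : Fin g' → Fin n → ℤ}
    (ht : IsFilling {x : ℕ | x % 2 = 1 ∧ 2 * (g * n) ≤ x ∧ x < 2 * ((g + g') * n)}
      fun i j => (t i j).natAbs) (hsum : ∀ i, ∑ j, t i j = ρ) :
    HasSignedArray (g + g') n ρ := by
  obtain ⟨s, hs, hrow⟩ := h
  refine ⟨Fin.append s t, ?_, fun i => ?_⟩
  · convert (hs.append ht ?_).mono ?_ with i j
    · induction i using Fin.addCases <;> simp only [Fin.append_left, Fin.append_right]
    · exact Set.disjoint_left.2 fun x hx hx' => hx.2.not_ge hx'.2.1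
    · rintro x (⟨hodd, hlt⟩ | ⟨hodd, -, hlt⟩)
      · exact ⟨hodd, by rw [add_mul]; omega⟩
      · exact ⟨hodd, hlt⟩
  · induction i using Fin.addCases with
    | left i => simpa only [Fin.append_left] using hrow i
    | right i => simpa only [Fin.append_right] using hsum i

lemma append_cols {n' : ℕ} {ρ' : ℤ} (h : HasSignedArray g n ρ) {t : Fin g → Fin n' → ℤ}
    (ht : IsFilling {x : ℕ | x % 2 = 1 ∧ 2 * (g * n) ≤ x ∧ x < 2 * (g * (n + n'))}
      fun i j => (t i j).natAbs) (hsum : ∀ i, ∑ j, t i j = ρ') :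
    HasSignedArray g (n + n') (ρ + ρ') := by
  obtain ⟨s, hs, hrow⟩ := h
  refine ⟨fun i => Fin.append (s i) (t i), ?_, fun i => ?_⟩
  · convert (hs.transpose.append ht.transpose ?_).transpose.mono ?_ with i j
    · induction j using Fin.addCases <;> simp only [Fin.append_left, Fin.append_right]
    · exact Set.disjoint_left.2 fun x hx hx' => hx.2.not_ge hx'.2.1
    · rintro x (⟨hodd, hlt⟩ | ⟨hodd, -, hlt⟩)
      · exact ⟨hodd, by rw [mul_add]; omega⟩
      · exact ⟨hodd, hlt⟩
  · simp only [Fin.sum_univ_add, Fin.append_left, Fin.append_right, hrow, hsum]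

lemma add_two (h : HasSignedArray g n ρ) : HasSignedArray g (n + 2) (ρ + 2) := by
  let t : Fin g → Fin 2 → ℤ := fun i => ![-(2 * (g * n + 2 * i) + 1), 2 * (g * n + 2 * i) + 3]
  refine h.append_cols (t := t) ⟨fun i i' j j' e => ?_, fun i j => ?_⟩ fun i => ?_
  · have : (0 : ℤ) ≤ g * n := by positivity
    rw [Fin.ext_iff]
    fin_cases j <;> fin_cases j' <;> simp [t] at e ⊢ <;> omega
  · have hi := i.isLt
    rw [mul_add]
    fin_cases j <;> simp [t] <;> omega
  · rw [Fin.sum_univ_two]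
    simp only [t, Matrix.cons_val_zero, Matrix.cons_val_one]
    ring

lemma add_four (h : HasSignedArray g n ρ) : HasSignedArray g (n + 4) ρ := by
  simpa using h.add_two.neg.add_two.neg

lemma zero : HasSignedArray g 0 0 :=
  ⟨fun _ => Fin.elim0, ⟨fun _ _ j => j.elim0, fun _ j => j.elim0⟩, fun _ => Fin.sum_univ_zero _⟩

lemma two_mul (k : ℕ) : HasSignedArray g (2 * k) (2 * k) := by
  induction k with
  | zero => exact zero
  | succ k ih => simpa only [Nat.cast_succ, mul_add, mul_one] using ih.add_two

lemma four_mul (c : ℕ) : HasSignedArray g (4 * c) 0 := by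
  induction c with
  | zero => exact zero
  | succ c ih => exact ih.add_four

-- Row `i` completes `2 i + 1` by two odd numbers whose difference is `2 i + 2` or `2 i`; for each
-- parity of `i` these pairs are nested around a common centre.
lemma three : HasSignedArray g 3 1 := by
  let b : ℕ → ℤ := fun i => (if i % 2 = 0 then g else 2 * g) + (g + 1) / 2
  let s : Fin g → Fin 3 → ℤ := fun i =>
    if (i : ℕ) % 2 = 0 then ![-(2 * i + 1), -(2 * (b i - i / 2) - 1), 2 * (b i + i / 2) + 1]
    else ![2 * i + 1, 2 * (b i - i / 2) - 1, -(2 * (b i + i / 2) + 1)]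
  refine ⟨s, ⟨fun i i' j j' e => ?_, fun i j => ?_⟩, fun i => ?_⟩
  · rw [Fin.ext_iff]
    fin_cases j <;> fin_cases j' <;> simp only [s, b] at e <;> split_ifs at e <;> simp at e ⊢ <;>
      omega
  · have hi := i.isLt
    fin_cases j <;> simp only [s, b] <;> split_ifs <;> simp <;> omega
  · rw [Fin.sum_univ_three]
    simp only [s, b]
    split_ifs <;> simp <;> omega

lemma two_mul_add_three (k : ℕ) : HasSignedArray g (2 * k + 3) 1 := by
  induction k with
  | zero => exact three
  | succ k ih => simpa [mul_add, add_right_comm] using ih.neg.add_two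

lemma six_add_two_rows (h : HasSignedArray g 6 0) : HasSignedArray (g + 2) 6 0 := by
  let c : Fin 2 → Fin 6 → ℕ := ![![1, 5, 13, 3, 7, 9], ![11, 19, 23, 15, 17, 21]]
  let ε : Fin 6 → ℤ := ![1, 1, 1, -1, -1, -1]
  have habs (i j) : (ε j * (12 * g + c i j : ℕ)).natAbs = 12 * g + c i j := by
    have hε : ∀ j, (ε j).natAbs = 1 := by decide
    rw [Int.natAbs_mul, hε, one_mul, Int.natAbs_natCast]
  have hc : IsFilling {x | x % 2 = 1 ∧ x < 24} c := by
    refine ⟨fun i i' j j' => ?_, by decide⟩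
    revert i i' j j'
    decide
  refine h.append_rows (t := fun i j => ε j * (12 * g + c i j : ℕ)) ?_ fun i => ?_
  · simp only [habs]
    refine hc.map (add_right_injective _).injOn ?_
    rintro x ⟨hodd, hlt⟩
    constructor <;> omega
  · fin_cases i <;> simp [c, ε, Fin.sum_univ_six] <;> ring

lemma odd_six (d : ℕ) : HasSignedArray (2 * d + 1) 6 0 := by
  induction d with
  | zero =>
    refine ⟨fun _ => ![1, 3, 5, 9, -7, -11], ⟨fun i i' j j' => ?_, by decide⟩, by decide⟩
    revert i i' j j'
    decide
  | succ d ih => exact ih.six_add_two_rows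

lemma odd_four_mul_add_six (d c : ℕ) : HasSignedArray (2 * d + 1) (4 * c + 6) 0 := by
  induction c with
  | zero => exact odd_six d
  | succ c ih => exact ih.add_four

end HasSignedArray

section SmallCases

variable {p q : ℕ}

lemma hasCentredArray_of_even_of_even (hp : Even p) (hq : Even q) (hq' : 2 < q) :
    HasCentredArray p q 0 := by
  obtain ⟨a, rfl⟩ := hp
  obtain ⟨b, rfl⟩ := hq
  rcases Nat.even_or_odd' b with ⟨c, rfl | rfl⟩
  · rw [← two_mul (2 * c), ← mul_assoc]
    exact (HasSignedArray.four_mul c).hasCentredArray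
  rcases Nat.even_or_odd' a with ⟨d, rfl | rfl⟩
  · rw [← two_mul (2 * d), ← mul_assoc]
    exact (HasSignedArray.four_mul d).hasCentredArray.transpose
  obtain ⟨c, rfl⟩ : ∃ e, c = e + 1 := ⟨c - 1, by omega⟩
  convert (HasSignedArray.odd_four_mul_add_six d c).hasCentredArray using 1
  omega

lemma hasAntimagicArray_three_of_even (hp : Even p) (hp' : p ≠ 0) : HasAntimagicArray p p 3 := by
  obtain ⟨g, rfl⟩ := hp
  have hrect := (HasSignedArray.two_mul (g := g) g).hasCentredArray
  rw [two_mul g] at hrect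
  refine hrect.hasAntimagicArray_three ?_ ?_ <;> rw [sub_self, zero_mul] <;> omega

lemma hasAntimagicArray_three_of_even_of_odd (hp : Even p) (hp' : p ≠ 0) (hq : Odd q)
    (hq' : q ≠ 1) : HasAntimagicArray p q 3 := by
  have hunit : ¬IsUnit ((p : ℤ) * q + 1) := by
    have : 0 < p * q := Nat.mul_pos (by omega) hq.pos
    rw [← Nat.cast_mul, Int.isUnit_iff]
    omega
  obtain ⟨g, rfl⟩ := hp
  obtain ⟨k, rfl⟩ : ∃ k, q = 2 * k + 3 := by
    obtain ⟨k, rfl⟩ := hq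
    exact ⟨k - 1, by omega⟩
  refine (HasSignedArray.two_mul_add_three k).hasCentredArray.hasAntimagicArray_three
    (fun h => hunit ?_) fun h => hunit ?_
  · exact IsUnit.of_mul_eq_one_right _ h.symm
  · exact IsUnit.of_mul_eq_one_right (-((g + g : ℕ) - (2 * k + 3 : ℕ) : ℤ))
      (by linear_combination h)

-- Superposing the orthogonal Latin squares `i + j` and `j - i` equalizes all line sums.
lemma exists_semimagicSquare {n : ℕ} (hn : Odd (n + 1)) :
    ∃ (B : Fin (n + 1) → Fin (n + 1) → ℕ) (R : ℕ), IsFilling (Set.Icc 1 ((n + 1) * (n + 1))) B ∧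
      (∀ i, ∑ j, B i j = R) ∧ (∀ j, ∑ i, B i j = R) ∧ ∀ j, B 0 j = (n + 2) * j + 1 := by
  let C : Fin (n + 1) → Fin (n + 1) → Fin ((n + 1) * (n + 1)) :=
    fun i j => finProdFinEquiv (j - i, i + j)
  have hC : IsFilling Set.univ C := by
    refine ⟨fun i i' j j' e => ?_, fun _ _ => Set.mem_univ _⟩
    obtain ⟨hsub, hadd⟩ := Prod.ext_iff.1 (finProdFinEquiv.injective e)
    have hdouble : Function.Injective fun j : Fin (n + 1) => 2 • j :=
      (nsmulCoprime (by simpa using hn)).injective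
    have hj : j = j' := hdouble <| by
      calc 2 • j = (j - i) + (i + j) := by abel
        _ = (j' - i') + (i' + j') := congrArg₂ _ hsub hadd
        _ = 2 • j' := by abel
    subst hj
    exact ⟨add_right_cancel hadd, rfl⟩
  have hperm (σ τ : Equiv.Perm (Fin (n + 1))) :
      ∑ j, ((τ j : ℕ) + (n + 1) * σ j + 1) = ∑ j : Fin (n + 1), ((j : ℕ) + (n + 1) * j + 1) := by
    simp only [Finset.sum_add_distrib, ← Finset.mul_sum]
    rw [Equiv.sum_comp σ fun j => (j : ℕ), Equiv.sum_comp τ fun j => (j : ℕ)]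
  refine ⟨fun i j => C i j + 1, _, hC.map (f := fun x => (x : ℕ) + 1)
    (fun x _ y _ e => Fin.ext (Nat.succ_injective e)) fun x _ => ⟨Nat.succ_pos _, x.isLt⟩,
    fun i => hperm (Equiv.subRight i) (Equiv.addLeft i),
    fun j => hperm (Equiv.subLeft j) (Equiv.addRight j), fun j => ?_⟩
  simp only [C, finProdFinEquiv_apply_val, sub_zero, zero_add]
  ring

-- Rotating row `0` of a semimagic square by one step moves every column sum, but no row sum.
lemma hasAntimagicArray_three_of_odd (hp : Odd p) (hp' : p ≠ 1) : HasAntimagicArray p p 3 := by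
  obtain ⟨n, rfl⟩ : ∃ n, p = n + 1 := ⟨p - 1, by have := hp.pos; omega⟩
  obtain ⟨B, R, hB, hrow, hcol, hB0⟩ := exists_semimagicSquare hp
  let σ : Fin (n + 1) → Equiv.Perm (Fin (n + 1)) := fun i => if i = 0 then Equiv.addRight 1 else 1
  have hrow' (i) : ∑ j, B i (σ i j) = R := (Equiv.sum_comp (σ i) (B i)).trans (hrow i)
  have hcol' (j : Fin (n + 1)) :
      ∑ i, B i (σ i j) + (n + 2) * j = R + (n + 2) * (j + 1 : Fin (n + 1)) := by
    have hrest : ∑ i : Fin n, B i.succ (σ i.succ j) = ∑ i : Fin n, B i.succ j := by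
      simp [σ, Fin.succ_ne_zero]
    have hfirst : B 0 (σ 0 j) = B 0 (j + 1) := by simp [σ]
    rw [← hcol j, Fin.sum_univ_succ, Fin.sum_univ_succ, hrest, hfirst, hB0, hB0]
    ring
  have hmove (j) : ∑ i, B i (σ i j) = R + (n + 2) ∨ ∑ i, B i (σ i j) + (n + 2) * n = R := by
    have h := hcol' j
    rw [Fin.val_add_one] at h
    split_ifs at h with hj
    · exact Or.inr (by simpa [hj] using h)
    · exact Or.inl (by linarith)
  have hn : 0 < (n + 2) * n := Nat.mul_pos (by omega) (by omega)
  refine ⟨fun i j => B i (σ i j), hB.permRows σ, fun i j => ?_,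
    {R, R + (n + 2), R - (n + 2) * n}, Finset.card_le_three, fun i => ?_, fun j => ?_⟩
  · have hne : ∑ i, B i (σ i j) ≠ R := by
      have := hmove j
      omega
    exact (hrow' i).trans_ne hne.symm
  · simp [hrow' i]
  · simp only [Finset.mem_insert, Finset.mem_singleton]
    rcases hmove j with h | h
    · exact Or.inr (Or.inl h)
    · exact Or.inr (Or.inr (Nat.eq_sub_of_add_eq h))

end SmallCases

section SubsetSums

lemma exists_subset_range_card_eq_sum_eq {s d u : ℕ} (hu : u ≤ s * d) :
    ∃ J ⊆ Finset.range (s + d), J.card = s ∧ ∑ j ∈ J, j = ∑ j ∈ Finset.range s, j + u := by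
  induction s generalizing d u with
  | zero => exact ⟨∅, by simp, rfl, by simpa [eq_comm] using hu⟩
  | succ s ih =>
    let a := min u d
    have hua : u - a ≤ s * a := by
      rcases le_total u d with h | h
      · simp [a, h]
      · rw [Nat.sub_le_iff_le_add]
        simpa only [a, min_eq_right h, add_mul, one_mul] using hu
    have had : a ≤ d := min_le_right u d
    obtain ⟨J, hJ, hcard, hsum⟩ := ih hua
    have hmem : s + a ∉ J := fun h => by simpa using hJ h
    refine ⟨insert (s + a) J, Finset.insert_subset (Finset.mem_range.2 (by omega)) ?_, ?_, ?_⟩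
    · exact hJ.trans (Finset.range_mono (by omega))
    · rw [Finset.card_insert_of_notMem hmem, hcard]
    · rw [Finset.sum_insert hmem, hsum, Finset.sum_range_succ]
      omega

lemma exists_card_eq_sum_two_mul_add_one_sub_eq {N s : ℕ} {e : ℤ} (hs : s ≤ N)
    (he : |e| ≤ s * (N - s)) (heven : Even (e + s * (N - s))) :
    ∃ J : Finset (Fin N), J.card = s ∧ ∑ j ∈ J, (2 * (j : ℤ) + 1 - N) = e := by
  obtain ⟨d, rfl⟩ := Nat.exists_eq_add_of_le hs
  rw [Nat.cast_add, add_sub_cancel_left] at he heven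
  obtain ⟨u, hu⟩ := heven
  obtain ⟨hlow, hhigh⟩ := abs_le.1 he
  lift u to ℕ using by omega
  obtain ⟨J, hJ, hcard, hsum⟩ := exists_subset_range_card_eq_sum_eq (s := s) (d := d) (u := u)
    (by zify; omega)
  have hgauss (t : ℕ) : 2 * ∑ j ∈ Finset.range t, (j : ℤ) = t * (t - 1) := by
    induction t with
    | zero => rfl
    | succ t ih => rw [Finset.sum_range_succ, mul_add, ih]; push_cast; ring
  have hbound (j) (hj : j ∈ J) : j < s + d := Finset.mem_range.1 (hJ hj)
  have hmap : ∑ j ∈ J.attachFin hbound, (j : ℤ) = ∑ j ∈ J, (j : ℤ) := by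
    conv_rhs => rw [← Finset.map_valEmbedding_attachFin hbound]
    exact (Finset.sum_map _ Fin.valEmbedding fun j : ℕ => (j : ℤ)).symm
  refine ⟨J.attachFin hbound, by simpa using hcard, ?_⟩
  zify at hsum
  rw [Finset.sum_sub_distrib, Finset.sum_add_distrib, ← Finset.mul_sum, hmap, hsum]
  simp only [Finset.sum_const, Finset.card_attachFin, hcard, nsmul_eq_mul, Nat.cast_add]
  linear_combination hgauss s - hu

end SubsetSums

section Strips

/-- The function `a` lists the integers of `[-k, k]` in some order. -/
structure IsArrangement (k : ℕ) (a : Fin (2 * k + 1) → ℤ) : Prop where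
  injective : Function.Injective a
  mem : ∀ j, a j ∈ Set.Icc (-k : ℤ) k

namespace IsArrangement

variable {k : ℕ} {a : Fin (2 * k + 1) → ℤ}

lemma sub_cast (k : ℕ) : IsArrangement k fun j => (j : ℤ) - k :=
  ⟨fun _ _ e => Fin.ext (by simpa using e), fun j => by simp only [Set.mem_Icc]; omega⟩

lemma comp (h : IsArrangement k a) (σ : Equiv.Perm (Fin (2 * k + 1))) : IsArrangement k (a ∘ σ) :=
  ⟨h.injective.comp σ.injective, fun j => h.mem (σ j)⟩

lemma neg (h : IsArrangement k a) : IsArrangement k (-a) :=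
  ⟨neg_injective.comp h.injective, fun j => by
    have := h.mem j
    simp only [Set.mem_Icc, Pi.neg_apply] at this ⊢
    omega⟩

lemma sum_eq_zero (h : IsArrangement k a) : ∑ j, a j = 0 := by
  have himage : Finset.univ.image a = Finset.Icc (-k : ℤ) k := by
    apply Finset.eq_of_subset_of_card_le
    · simpa [Finset.subset_iff] using h.mem
    · rw [Finset.card_image_of_injective _ h.injective, Int.card_Icc, Finset.card_fin]
      omega
  have hneg : ∑ x ∈ Finset.Icc (-k : ℤ) k, x = -∑ x ∈ Finset.Icc (-k : ℤ) k, x := by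
    rw [← Finset.sum_neg_distrib]
    refine Finset.sum_nbij' (fun x => -x) (fun x => -x) ?_ ?_ ?_ ?_ ?_ <;>
      simp only [Finset.mem_Icc] <;> omega
  rw [← Finset.sum_image h.injective.injOn (f := fun x => x), himage]
  omega

end IsArrangement

/-- There is a bijective arrangement of the pairs `(x, y)` with `x ∈ X` and `y ∈ [-k, k]` in an
array with `n` rows and `2 k + 1` columns such that, when `(x, y)` is weighted by `x + p y`, all
row sums vanish and the column sums are given by `c`. With `p = 2 h + 1` and `X = [-h, h]` these
weights are the integers of absolute value at most `(p (2 k + 1) - 1) / 2`. -/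
def HasStrip (p k n : ℕ) (X : Set ℤ) (c : Fin (2 * k + 1) → ℤ) : Prop :=
  ∃ A : Fin n → Fin (2 * k + 1) → ℤ × ℤ, IsFilling (X ×ˢ Set.Icc (-k : ℤ) k) A ∧
    (∀ i, ∑ j, ((A i j).1 + p * (A i j).2) = 0) ∧ ∀ j, ∑ i, ((A i j).1 + p * (A i j).2) = c j

namespace HasStrip

variable {p k n : ℕ} {X : Set ℤ} {c : Fin (2 * k + 1) → ℤ}

lemma mono {X' : Set ℤ} (h : HasStrip p k n X c) (hX : X ⊆ X') : HasStrip p k n X' c := by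
  obtain ⟨A, hA, hrow, hcol⟩ := h
  exact ⟨A, hA.mono (Set.prod_mono_left hX), hrow, hcol⟩

lemma union {n' : ℕ} {X' : Set ℤ} {c' : Fin (2 * k + 1) → ℤ} (h : HasStrip p k n X c)
    (h' : HasStrip p k n' X' c') (hX : Disjoint X X') :
    HasStrip p k (n + n') (X ∪ X') (c + c') := by
  obtain ⟨A, hA, hrow, hcol⟩ := h
  obtain ⟨A', hA', hrow', hcol'⟩ := h'
  refine ⟨Fin.append A A', ?_, fun i => ?_, fun j => ?_⟩
  · rw [Set.union_prod]
    exact hA.append hA' (Set.disjoint_prod.2 (Or.inl hX))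
  · induction i using Fin.addCases with
    | left i => simpa only [Fin.append_left] using hrow i
    | right i => simpa only [Fin.append_right] using hrow' i
  · simp only [Fin.sum_univ_add, Fin.append_left, Fin.append_right, hcol, hcol', Pi.add_apply]

lemma of_permCols {x : Fin n → ℤ} (hx : Function.Injective x) (hX : ∀ i, x i ∈ X)
    {a : Fin n → Fin (2 * k + 1) → ℤ} (ha : ∀ i, IsArrangement k (a i))
    (σ : Fin (2 * k + 1) → Equiv.Perm (Fin n))
    (hrow : ∀ i, ∑ j, (x (σ j i) + p * a (σ j i) j) = 0) :
    HasStrip p k n X fun j => ∑ i, (x i + p * a i j) := by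
  have hbase : IsFilling (X ×ˢ Set.Icc (-k : ℤ) k) fun i j => (x i, a i j) := by
    refine ⟨fun i i' j j' e => ?_, fun i j => ⟨hX i, (ha i).mem j⟩⟩
    obtain ⟨hi, hj⟩ := Prod.ext_iff.1 e
    obtain rfl := hx hi
    exact ⟨rfl, (ha i).injective hj⟩
  exact ⟨_, hbase.permCols σ, hrow, fun j => Equiv.sum_comp (σ j) fun i => x i + p * a i j⟩

-- The array with rows `(v, a j)` and `(-v, b j)` has row sums `± (2 k + 1) v`; exchanging the two
-- entries in `s` columns `J` lowers the coefficient to `p`, and the `y`-part cancels the rest.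
lemma pair {s v : ℕ} (hv : v ≠ 0) (hp : p + 2 * s = 2 * k + 1) {a b : Fin (2 * k + 1) → ℤ}
    (ha : IsArrangement k a) (hb : IsArrangement k b) {J : Finset (Fin (2 * k + 1))}
    (hJ : J.card = s) (hsum : ∑ j ∈ J, (a j - b j) = v) :
    HasStrip p k 2 {x | x.natAbs = v} fun j => p * (a j + b j) := by
  have hq : (2 * k + 1 : ℤ) = p + 2 * s := by exact_mod_cast hp.symm
  let x : Fin 2 → ℤ := ![v, -v]
  let σ : Fin (2 * k + 1) → Equiv.Perm (Fin 2) := fun j => if j ∈ J then Equiv.swap 0 1 else 1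
  have hx : Function.Injective x := by
    intro i i'
    fin_cases i <;> fin_cases i' <;> simp [x] <;> omega
  have hX (i) : x i ∈ {x : ℤ | x.natAbs = v} := by fin_cases i <;> simp [x]
  have harr (i) : IsArrangement k (![a, b] i) := by fin_cases i <;> assumption
  have hmove : ∑ j ∈ J, (2 * (v : ℤ) + p * (a j - b j)) = (2 * k + 1) * v := by
    rw [Finset.sum_add_distrib, Finset.sum_const, hJ, ← Finset.mul_sum, hsum, nsmul_eq_mul, hq]
    ring
  convert of_permCols (p := p) hx hX harr σ ?_ using 2 with j
  · simp only [Fin.sum_univ_two, x, Matrix.cons_val_zero, Matrix.cons_val_one,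
      Matrix.cons_val_fin_one]
    ring
  · have hrow0 : ∑ j, (x (σ j 0) + p * ![a, b] (σ j 0) j) =
        ∑ j, (v + p * a j) - ∑ j ∈ J, (2 * (v : ℤ) + p * (a j - b j)) := by
      rw [← Finset.sum_ite_mem_eq J, ← Finset.sum_sub_distrib]
      refine Finset.sum_congr rfl fun j _ => ?_
      by_cases hj : j ∈ J <;> simp [x, σ, hj]
      ring
    have hrow1 : ∑ j, (x (σ j 1) + p * ![a, b] (σ j 1) j) =
        ∑ j, (-v + p * b j) + ∑ j ∈ J, (2 * (v : ℤ) + p * (a j - b j)) := by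
      rw [← Finset.sum_ite_mem_eq J, ← Finset.sum_add_distrib]
      refine Finset.sum_congr rfl fun j _ => ?_
      by_cases hj : j ∈ J <;> simp [x, σ, hj]
      ring
    intro i
    fin_cases i
    · refine hrow0.trans ?_
      rw [hmove, Finset.sum_add_distrib, ← Finset.mul_sum, ha.sum_eq_zero]
      simp
    · refine hrow1.trans ?_
      rw [hmove, Finset.sum_add_distrib, ← Finset.mul_sum, hb.sum_eq_zero]
      simp

end HasStrip

end Strips

section StripConstructions

variable {p k s v w : ℕ}

lemma abs_le_mul_two_mul_sub (hs : s ≠ 0) (hv : v + s ≤ k) : |(v : ℤ)| ≤ s * (2 * k - s) := by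
  zify at hv
  have : (1 : ℤ) ≤ s := by omega
  rw [Nat.abs_cast]
  nlinarith

lemma exists_card_eq_sum_add_finRotate_eq (hv : Odd v) (hs : s ≠ 0) (hvs : v + s ≤ k) :
    ∃ J : Finset (Fin (2 * k + 1)), J.card = s ∧
      ∑ j ∈ J, (((j : ℤ) - k) + ((finRotate (2 * k + 1) j : ℤ) - k)) = v := by
  have hodd (t : ℕ) (ht : Odd t) (ht' : t ≤ s) : ∃ J : Finset (Fin (2 * k)), J.card = t ∧
      ∑ j ∈ J.map Fin.castSuccEmb, (((j : ℤ) - k) + ((finRotate (2 * k + 1) j : ℤ) - k)) = v := by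
    have heven : Even ((v : ℤ) + t * ((2 * k : ℕ) - t)) := by
      obtain ⟨a, rfl⟩ := hv
      obtain ⟨b, rfl⟩ := ht
      simp [parity_simps, ← Int.not_even_iff_odd]
    obtain ⟨J, hJ, hsum⟩ := exists_card_eq_sum_two_mul_add_one_sub_eq (N := 2 * k) (by omega)
      (by simpa using abs_le_mul_two_mul_sub ht.pos.ne' (by omega)) heven
    refine ⟨J, hJ, ?_⟩
    rw [Finset.sum_map, ← hsum]
    refine Finset.sum_congr rfl fun j _ => ?_
    simp only [Fin.coe_castSuccEmb, Fin.val_castSucc, finRotate_apply, Fin.coeSucc_eq_succ,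
      Fin.val_succ, Nat.cast_add, Nat.cast_one, Nat.cast_mul, Nat.cast_ofNat]
    ring
  rcases Nat.even_or_odd s with hs' | hs'
  · obtain ⟨t, rfl⟩ := Nat.exists_eq_succ_of_ne_zero hs
    obtain ⟨J, hJ, hsum⟩ := hodd t (by simpa [parity_simps] using hs') t.le_succ
    have hlast : Fin.last (2 * k) ∉ J.map Fin.castSuccEmb := by simp [Fin.castSucc_ne_last]
    refine ⟨insert (Fin.last _) (J.map Fin.castSuccEmb), ?_, ?_⟩
    · rw [Finset.card_insert_of_notMem hlast, Finset.card_map, hJ]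
    · rw [Finset.sum_insert hlast, hsum]
      simp only [finRotate_last, Fin.val_last, Fin.val_zero, Nat.cast_mul, Nat.cast_ofNat,
        Nat.cast_zero]
      ring
  · obtain ⟨J, hJ, hsum⟩ := hodd s hs' le_rfl
    exact ⟨_, (Finset.card_map _).trans hJ, hsum⟩

namespace HasStrip

lemma pair_even (hp : p + 2 * s = 2 * k + 1) (hs : s ≠ 0) (hv : Even v) (hv' : v ≠ 0)
    (hvs : v + s ≤ k) : HasStrip p k 2 {x | x.natAbs = v} 0 := by
  have hparity : Even ((v : ℤ) + s * ((2 * k + 1 : ℕ) - s)) := by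
    obtain ⟨a, rfl⟩ := hv
    rcases Nat.even_or_odd' s with ⟨b, rfl | rfl⟩ <;> simp [parity_simps]
  obtain ⟨J, hJ, hsum⟩ := exists_card_eq_sum_two_mul_add_one_sub_eq (N := 2 * k + 1) (by omega)
    ((abs_le_mul_two_mul_sub hs hvs).trans (by push_cast; nlinarith)) hparity
  have ha := IsArrangement.sub_cast k
  convert pair hv' hp ha ha.neg hJ ?_ using 2
  · simp
  · rw [← hsum]
    refine Finset.sum_congr rfl fun j _ => ?_
    simp only [Pi.neg_apply]
    push_cast
    ring

-- The column sums of the two odd pairs are opposite multiples of the displacement of `finRotate`.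
lemma pair_odd_union_pair_odd (hp : p + 2 * s = 2 * k + 1) (hs : s ≠ 0) (hv : Odd v)
    (hw : Odd w) (hvw : v ≠ w) (hvs : v + s ≤ k) (hws : w + s ≤ k) :
    HasStrip p k (2 + 2) ({x | x.natAbs = v} ∪ {x | x.natAbs = w}) 0 := by
  obtain ⟨J, hJ, hsum⟩ := exists_card_eq_sum_add_finRotate_eq hv hs hvs
  obtain ⟨K, hK, hsum'⟩ := exists_card_eq_sum_add_finRotate_eq hw hs hws
  have ha := IsArrangement.sub_cast k
  have hb := ha.comp (finRotate (2 * k + 1))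
  have hv₂ := pair hv.pos.ne' hp ha hb.neg hJ
    (by simpa only [Pi.neg_apply, sub_neg_eq_add, Function.comp_apply] using hsum)
  have hw₂ := pair hw.pos.ne' hp hb ha.neg hK
    (by simpa only [Pi.neg_apply, sub_neg_eq_add, Function.comp_apply, add_comm] using hsum')
  convert hv₂.union hw₂ ?_ using 1
  · ext j
    simp only [Pi.zero_apply, Pi.add_apply, Pi.neg_apply]
    ring
  · rw [Set.disjoint_left]
    rintro x rfl
    exact hvw

end HasStrip

lemma sum_fin_sub_eq (g : ℤ → ℤ) (k : ℕ) : ∑ j : Fin (2 * k + 1), g (j - k) =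
    g 0 + ∑ i ∈ Finset.range k, (g (i + 1) + g (-(i + 1))) := by
  induction k with
  | zero => simp
  | succ k ih =>
    rw [Finset.sum_range_succ, ← add_assoc, ← ih, mul_add, mul_one, Fin.sum_univ_succ,
      Fin.sum_univ_castSucc]
    simp only [Fin.val_zero, Fin.val_succ, Fin.val_castSucc, Fin.val_last]
    push_cast
    ring_nf

lemma sum_fin_sub_eq_of_pairs {g : ℤ → ℤ} (hk : 3 ≤ k) (hg : ∀ z, 3 < z → g z + g (-z) = 0) :
    ∑ j : Fin (2 * k + 1), g (j - k) =
      g 0 + (g 1 + g (-1)) + (g 2 + g (-2)) + (g 3 + g (-3)) := by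
  rw [sum_fin_sub_eq, Finset.eventually_constant_sum (N := 3) (fun i hi => hg _ (by omega)) hk]
  simp [Finset.sum_range_succ, add_assoc]

/-- The arrangement of `[-k, k]` taking the value `-(k + z) / 2` or `(k + 1 - z) / 2` at `z`,
whichever is an integer. Its sum with the identity is again an arrangement of `[-k, k]`. -/
def skewHalf (k : ℕ) (z : ℤ) : ℤ :=
  if (k + z) % 2 = 0 then -((k + z) / 2) else (k + 1 - z) / 2

lemma skewHalf_neg (k : ℕ) (z : ℤ) : skewHalf k (-z) = skewHalf k z + z := by
  simp only [skewHalf]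
  split_ifs <;> omega

lemma skewHalf_add_two (k : ℕ) (z : ℤ) : skewHalf k (z + 2) = skewHalf k z - 1 := by
  simp only [skewHalf]
  split_ifs <;> omega

lemma isArrangement_skewHalf (k : ℕ) : IsArrangement k fun j => skewHalf k (j - k) := by
  refine ⟨fun j j' e => Fin.ext ?_, fun j => ?_⟩ <;> simp only [skewHalf, Set.mem_Icc] at *
  · split_ifs at e <;> omega
  · split_ifs <;> omega

lemma isArrangement_neg_skewHalf_add (k : ℕ) :
    IsArrangement k fun j => -(skewHalf k (j - k) + (j - k)) := by
  convert ((isArrangement_skewHalf k).comp Fin.revPerm).neg using 2 with j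
  rw [← skewHalf_neg]
  simp only [Pi.neg_apply, Function.comp_apply, Fin.revPerm_apply, Fin.val_rev]
  congr 2
  omega

/-- The three values of `y` in the column `z` of the three-row strip; they add up to `0`. -/
def tripleCol (k : ℕ) (z : ℤ) : Fin 3 → ℤ :=
  ![skewHalf k z, z, -(skewHalf k z + z)]

lemma isArrangement_tripleCol (k : ℕ) (i : Fin 3) :
    IsArrangement k fun j => tripleCol k (j - k) i := by
  fin_cases i
  exacts [isArrangement_skewHalf k, .sub_cast k, isArrangement_neg_skewHalf_add k]

/-- The permutation of the entries of the column `z` of the three-row strip. Columns `z` and `-z`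
with `|z| > 3` are reversed copies of each other; the seven central columns are permuted so as to
balance among themselves. -/
def triplePerm (z : ℤ) : Equiv.Perm (Fin 3) :=
  if z = 1 then Equiv.swap 0 1 else if z = -1 then Equiv.swap 1 2
  else if z = 2 ∨ z = -3 then finRotate 3 else if z = 3 ∨ z = -2 then (finRotate 3)⁻¹
  else if z < 0 then Equiv.swap 0 2 else 1

lemma sum_triplePerm_eq_zero {α β : ℤ} (hk : 3 ≤ k) (i : Fin 3) :
    ∑ j : Fin (2 * k + 1), (![α, 0, -α] (triplePerm (j - k) i) +
      β * tripleCol k (j - k) (triplePerm (j - k) i)) = 0 := by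
  have hperm : ⇑(Equiv.swap 0 1 : Equiv.Perm (Fin 3)) = ![1, 0, 2] ∧
      ⇑(Equiv.swap 1 2 : Equiv.Perm (Fin 3)) = ![0, 2, 1] ∧
      ⇑(Equiv.swap 0 2 : Equiv.Perm (Fin 3)) = ![2, 1, 0] ∧
      ⇑(finRotate 3)⁻¹ = ![2, 0, 1] := by decide
  obtain ⟨h01, h12, h02, hrot⟩ := hperm
  let g : ℤ → ℤ := fun z =>
    ![α, 0, -α] (triplePerm z i) + β * tripleCol k z (triplePerm z i)
  refine (sum_fin_sub_eq_of_pairs (g := g) hk fun z hz => ?_).trans ?_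
  · have hz₁ : triplePerm z = 1 := by simp only [triplePerm]; split_ifs <;> first | rfl | omega
    have hz₂ : triplePerm (-z) = Equiv.swap 0 2 := by
      simp only [triplePerm]; split_ifs <;> first | rfl | omega
    fin_cases i <;> simp [g, tripleCol, hz₁, hz₂, h02, skewHalf_neg] <;> ring
  · have hstep := skewHalf_add_two k
    have h2 : skewHalf k 2 = skewHalf k 0 - 1 := hstep 0
    have h3 : skewHalf k 3 = skewHalf k 1 - 1 := hstep 1
    fin_cases i <;> simp [g, tripleCol, triplePerm, h01, h12, hrot, skewHalf_neg, h2, h3] <;> ring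

lemma HasStrip.triple (hk : 3 ≤ k) (hv : v ≠ 0) :
    HasStrip p k 3 {x | x.natAbs = v ∨ x = 0} 0 := by
  convert of_permCols (x := ![v, 0, -v]) ?_ ?_ (isArrangement_tripleCol k)
    (fun j => triplePerm (j - k)) (sum_triplePerm_eq_zero hk) using 1
  · ext j
    simp only [Fin.sum_univ_three, tripleCol, Matrix.cons_val, Pi.zero_apply]
    ring
  · intro i i'
    fin_cases i <;> fin_cases i' <;> simp <;> omega
  · intro i
    fin_cases i <;> simp

end StripConstructions

section OddOdd

variable {p q k n s h : ℕ}

namespace HasStrip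

lemma union_zero {n' : ℕ} {X X' : Set ℤ} (h : HasStrip p k n X 0) (h' : HasStrip p k n' X' 0)
    (hX : ∀ x ∈ X, x ∉ X') : HasStrip p k (n + n') (X ∪ X') 0 := by
  simpa only [add_zero] using h.union h' (Set.disjoint_left.2 hX)

lemma natAbs_le_odd (hp : p + 2 * s = 2 * k + 1) (hs : s ≠ 0) (hk : 3 ≤ k) (m : ℕ)
    (hms : 2 * m + 1 + s ≤ k) :
    HasStrip p k (2 * (2 * m + 1) + 1) {x | x.natAbs ≤ 2 * m + 1} 0 := by
  induction m using Nat.twoStepInduction with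
  | zero =>
    refine (triple hk one_ne_zero).mono fun x hx => ?_
    simp only [Set.mem_ofPred_eq] at hx ⊢
    omega
  | one =>
    have hodd := pair_odd_union_pair_odd hp hs (v := 1) (w := 3) (by decide) (by decide)
      (by decide) (by omega) (by omega)
    refine ((triple hk two_ne_zero).union_zero hodd fun x hx => ?_).mono fun x hx => ?_
    all_goals
      simp only [Set.mem_union, Set.mem_ofPred_eq] at hx ⊢
      omega
  | more m ih _ =>
    have hodd := pair_odd_union_pair_odd hp hs (odd_two_mul_add_one (m + 1))
      (odd_two_mul_add_one (m + 2)) (by omega) (by omega) (by omega)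
    have heven := pair_even hp hs (even_two_mul (m + 1)) (by omega) (by omega)
    have heven' := pair_even hp hs (even_two_mul (m + 2)) (by omega) (by omega)
    refine ((((ih (by omega)).union_zero heven fun x hx => ?_).union_zero heven'
      fun x hx => ?_).union_zero hodd fun x hx => ?_).mono fun x hx => ?_
    all_goals
      simp only [Set.mem_union, Set.mem_ofPred_eq] at hx ⊢
      omega

lemma natAbs_le (hp : p + 2 * s = 2 * k + 1) (hs : s ≠ 0) (hk : 3 ≤ k) (hn : n ≠ 0)
    (hns : n + s ≤ k) : HasStrip p k (2 * n + 1) {x | x.natAbs ≤ n} 0 := by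
  rcases Nat.even_or_odd' n with ⟨m, rfl | rfl⟩
  · obtain ⟨m, rfl⟩ : ∃ l, m = l + 1 := ⟨m - 1, by omega⟩
    have hodd := natAbs_le_odd hp hs hk m (by omega)
    have heven := pair_even hp hs (even_two_mul (m + 1)) hn hns
    refine (hodd.union_zero heven fun x hx => ?_).mono fun x hx => ?_
    all_goals
      simp only [Set.mem_union, Set.mem_ofPred_eq] at hx ⊢
      omega
  · exact natAbs_le_odd hp hs hk m hns

lemma hasCentredArray (H : HasStrip (2 * h + 1) k (2 * h + 1) {x | x.natAbs ≤ h} 0) :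
    HasCentredArray (2 * h + 1) (2 * k + 1) 0 := by
  obtain ⟨A, hA, hrow, hcol⟩ := H
  refine ⟨fun i j => 2 * ((A i j).1 + (2 * h + 1 : ℕ) * (A i j).2),
    hA.map (f := fun z => 2 * (z.1 + (2 * h + 1 : ℕ) * z.2)) ?_ ?_, fun i => ?_, fun j => ?_⟩
  · rintro ⟨x, y⟩ ⟨hx : x.natAbs ≤ h, -⟩ ⟨x', y'⟩ ⟨hx' : x'.natAbs ≤ h, -⟩ e
    have hxy : x + (2 * h + 1 : ℕ) * y = x' + (2 * h + 1 : ℕ) * y' :=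
      mul_left_cancel₀ two_ne_zero e
    have hdvd : x - x' = (2 * h + 1 : ℕ) * (y' - y) := by linear_combination hxy
    have hxx' : x - x' = 0 := Int.eq_zero_of_abs_lt_dvd ⟨_, hdvd⟩ (by rw [abs_lt]; omega)
    have hyy' : y' - y = 0 :=
      (mul_eq_zero.1 (hdvd.symm.trans hxx')).resolve_left (by positivity)
    exact Prod.ext (sub_eq_zero.1 hxx') (sub_eq_zero.1 hyy').symm
  · rintro ⟨x, y⟩ ⟨hx : x.natAbs ≤ h, hy : -(k : ℤ) ≤ y ∧ y ≤ k⟩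
    have hbound : |x + (2 * h + 1 : ℕ) * y| ≤ (h + (2 * h + 1) * k : ℕ) := by
      refine (abs_add_le _ _).trans ?_
      rw [abs_mul, Nat.abs_cast, Nat.cast_add h, Nat.cast_mul]
      exact add_le_add (abs_le.2 (by omega))
        (mul_le_mul_of_nonneg_left (abs_le.2 hy) (by positivity))
    have hcells : (2 * h + 1) * (2 * k + 1) = 2 * (h + (2 * h + 1) * k) + 1 := by ring
    rw [abs_le] at hbound
    simp only [hcells, centredProgression, Set.mem_ofPred_eq]
    omega
  · rw [← Finset.mul_sum, hrow]
    simp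
  · rw [← Finset.mul_sum, hcol]
    simp

end HasStrip

lemma hasCentredArray_three_five : HasCentredArray 3 5 0 := by
  refine ⟨![![-14, -12, 6, 12, 8], ![0, 2, 4, -4, -2], ![14, 10, -10, -8, -6]],
    ⟨fun i i' j j' => ?_, ?_⟩, by decide, by decide⟩
  · revert i i' j j'
    decide
  · simp only [centredProgression]
    decide

lemma hasCentredArray_of_odd_of_odd (hp : Odd p) (hq : Odd q) (hp' : p ≠ 1) (hpq : p < q) :
    HasCentredArray p q 0 := by
  obtain ⟨h, rfl⟩ := hp
  obtain ⟨k, rfl⟩ := hq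
  rcases le_or_gt 3 k with hk | hk
  · exact (HasStrip.natAbs_le (s := k - h) (by omega) (by omega) hk (by omega)
      (by omega)).hasCentredArray
  · obtain ⟨rfl, rfl⟩ : h = 1 ∧ k = 2 := by omega
    exact hasCentredArray_three_five

end OddOdd

lemma hasAntimagicArray_two_of_mod_two_eq {p q : ℕ} (hp : 2 ≤ p) (hpq : p < q)
    (hmod : p % 2 = q % 2) : HasAntimagicArray p q 2 := by
  refine HasCentredArray.hasAntimagicArray_two ?_ hpq.ne
  rcases Nat.even_or_odd p with h | h
  · exact hasCentredArray_of_even_of_even h (by grind) (by omega)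
  · exact hasCentredArray_of_odd_of_odd h (by grind) (by omega) hpq

lemma hasAntimagicArray_three {p q : ℕ} (hp : 2 ≤ p) (hq : 2 ≤ q) (h : p = q ∨ p % 2 ≠ q % 2) :
    HasAntimagicArray p q 3 := by
  rcases Nat.even_or_odd p with hp' | hp' <;> rcases Nat.even_or_odd q with hq' | hq'
  · obtain rfl : p = q := by grind
    exact hasAntimagicArray_three_of_even hp' (by omega)
  · exact hasAntimagicArray_three_of_even_of_odd hp' (by omega) hq' (by omega)
  · exact (hasAntimagicArray_three_of_even_of_odd hq' (by omega) hp' (by omega)).symm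
  · obtain rfl : p = q := by grind
    exact hasAntimagicArray_three_of_odd hp' (by omega)

theorem chiLA_Kpq_classification (p q : ℕ) (hp : 1 ≤ p) (hpq : p ≤ q) (hq : 2 ≤ q) :
    chiLA (completeBipartiteGraph (Fin p) (Fin q)) =
      if p = 1 ∧ p < q then q + 1
      else if 2 ≤ p ∧ p < q ∧ p % 2 = q % 2 then 2
      else 3 := by
  have : NeZero p := ⟨by omega⟩
  have : NeZero q := ⟨by omega⟩
  split_ifs with hstar hparity
  · obtain ⟨rfl, -⟩ := hstar
    obtain ⟨f, hf, hle⟩ := (hasAntimagicArray_one hq).exists_isLocalAntimagic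
    exact chiLA_eq_of_forall_le hf hle fun g hg => by simp [hg.colorCount_eq_card_add_one]
  · obtain ⟨f, hf, hle⟩ := (hasAntimagicArray_two_of_mod_two_eq hparity.1 hparity.2.1
      hparity.2.2).exists_isLocalAntimagic
    exact chiLA_eq_of_forall_le hf hle fun g hg =>
      hg.two_le_colorCount (u := .inl 0) (v := .inr 0) (by simp)
  · have h : p = q ∨ p % 2 ≠ q % 2 := by omega
    obtain ⟨f, hf, hle⟩ := (hasAntimagicArray_three (by omega) hq h).exists_isLocalAntimagic
    exact chiLA_eq_of_forall_le hf hle fun g hg => hg.three_le_colorCount (by simpa using h)
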